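/- Fix x, t ∈ ℝ and let (Ω₁, …, Ω_g) be the unique solution of the moment system Σ_{j=1}^{g} Ω_j ∫_{β_j}^{α_{j+1}} ζ^{k−1}/R(ζ) dζ = Σ_{j=1}^{g} ∫_{β_j}^{α_{j+1}} 2θ⁺(ζ; x, t) ζ^{k−1}/R(ζ) dζ (k = 1, …, g). Then the function G(λ) = (R(λ)/(2πi)) Σ_{j=1}^{g} ∫_{β_j}^{α_{j+1}} (Ω_j − 2θ⁺(ζ; x, t)) / ( R(ζ)(ζ − λ) ) dζ satisfies G(λ) = O(|λ|^{−1/2}) as λ → ∞ in ℂ∖[0, ∞); in particular G(λ) → 0 as λ → ∞. -/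

import Mathlib

open Complex Filter

lemma aux_integrable (b c : ℝ) (hbc : b < c) (f Q : ℝ → ℂ)
    (hf : ContinuousOn f (Set.Ioo b c)) (hQ : ContinuousOn Q (Set.Icc b c))
    (hQ0 : ∀ y ∈ Set.Icc b c, Q y ≠ 0)
    (hfQ : ∀ y ∈ Set.Ioo b c, f y ^ 2 = ((y : ℂ) - b) * ((y : ℂ) - c) * Q y) :
    IntervalIntegrable (fun y => (f y)⁻¹) MeasureTheory.volume b c := by
  obtain ⟨m, hm, hmin⟩ := isCompact_Icc.exists_isMinOn (Set.nonempty_Icc.2 hbc.le) hQ.norm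
  set q := ‖Q m‖ with hq
  have hq0 : 0 < q := norm_pos_iff.2 (hQ0 m hm)
  have hf0 : ∀ y ∈ Set.Ioo b c, f y ≠ 0 := by
    intro y hy h0
    have h1 := hfQ y hy
    rw [h0] at h1
    have h2 : ((y : ℂ) - b) ≠ 0 := by
      rw [← Complex.ofReal_sub]; exact_mod_cast (sub_pos.2 hy.1).ne'
    have h3 : ((y : ℂ) - c) ≠ 0 := by
      rw [← Complex.ofReal_sub]; exact_mod_cast (sub_neg.2 hy.2).ne
    have := mul_ne_zero (mul_ne_zero h2 h3) (hQ0 y ⟨hy.1.le, hy.2.le⟩)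
    apply this
    rw [← h1]; simp
  set K := (Real.sqrt ((c - b) / 2 * q))⁻¹ with hK
  have hI1 : IntervalIntegrable (fun y => (y - b) ^ (-(1/2) : ℝ)) MeasureTheory.volume b c := by
    have h := (intervalIntegral.intervalIntegrable_rpow' (a := 0) (b := c - b)
      (r := -(1/2)) (by norm_num)).comp_sub_right b
    simpa using h
  have hI2 : IntervalIntegrable (fun y => (c - y) ^ (-(1/2) : ℝ)) MeasureTheory.volume b c := by
    have h := (intervalIntegral.intervalIntegrable_rpow' (a := c - b) (b := 0)
      (r := -(1/2)) (by norm_num)).comp_sub_left c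
    simpa using h
  have hI := (hI1.add hI2).const_mul K
  rw [intervalIntegrable_iff_integrableOn_Ioo_of_le hbc.le] at hI ⊢
  refine MeasureTheory.Integrable.mono' hI
    ((hf.inv₀ hf0).aestronglyMeasurable measurableSet_Ioo) ?_
  refine (MeasureTheory.ae_restrict_iff' measurableSet_Ioo).2 (Filter.Eventually.of_forall ?_)
  intro y hy
  have hu : 0 < y - b := sub_pos.2 hy.1
  have hv : 0 < c - y := sub_pos.2 hy.2
  have hqy : q ≤ ‖Q y‖ := hmin ⟨hy.1.le, hy.2.le⟩
  have hn : ‖f y‖ ^ 2 = (y - b) * (c - y) * ‖Q y‖ := by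
    rw [← norm_pow, hfQ y hy, norm_mul, norm_mul, ← Complex.ofReal_sub, ← Complex.ofReal_sub,
      Complex.norm_real, Complex.norm_real, Real.norm_of_nonneg hu.le,
      Real.norm_of_nonpos (by linarith)]
    ring
  have key : ∀ u v : ℝ, 0 < u → (c - b) / 2 ≤ v → ‖f y‖ ^ 2 = u * v * ‖Q y‖ →
      ‖(f y)⁻¹‖ ≤ K * u ^ (-(1/2) : ℝ) := by
    intro u v hu hv h
    have h1 : Real.sqrt ((c - b) / 2 * q) * Real.sqrt u ≤ ‖f y‖ := by
      rw [← Real.sqrt_mul (by apply mul_nonneg; linarith; exact hq0.le)]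
      apply Real.sqrt_le_iff.2 ⟨norm_nonneg _, _⟩
      rw [h]
      have : (c - b) / 2 * q ≤ v * ‖Q y‖ := by
        apply mul_le_mul hv hqy hq0.le; linarith
      nlinarith
    rw [norm_inv, Real.rpow_neg hu.le, ← Real.sqrt_eq_rpow, hK, ← mul_inv]
    apply inv_anti₀ _ h1
    have : 0 < (c - b) / 2 * q := mul_pos (by linarith) hq0
    positivity
  have hK0 : 0 ≤ K := by positivity
  have hp1 : 0 ≤ (y - b) ^ (-(1/2) : ℝ) := Real.rpow_nonneg hu.le _
  have hp2 : 0 ≤ (c - y) ^ (-(1/2) : ℝ) := Real.rpow_nonneg hv.le _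
  show _ ≤ K * ((y - b) ^ (-(1/2) : ℝ) + (c - y) ^ (-(1/2) : ℝ))
  rw [mul_add]
  rcases le_total ((c - b) / 2) (c - y) with h | h
  · have := key _ _ hu h hn
    nlinarith [mul_nonneg hK0 hp2]
  · have := key (c - y) (y - b) hv (by linarith) (by rw [hn]; ring)
    nlinarith [mul_nonneg hK0 hp1]

lemma aux_mono (g : ℕ) (a b : ℕ → ℝ)
    (hord : ∀ j ∈ Finset.Icc 1 g, a j < b j ∧ b j < a (j + 1)) (i j : ℕ) (hi : 1 ≤ i)
    (hij : i ≤ j) (hj : j ≤ g + 1) : a i ≤ a j := by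
  induction j, hij using Nat.le_induction with
  | base => exact le_rfl
  | succ n hn ih =>
    have := hord n (Finset.mem_Icc.2 ⟨by omega, by omega⟩)
    have := ih (by omega)
    linarith

lemma aux_prod (g : ℕ) (a b : ℕ → ℝ) (z : ℂ) :
    (z - (a (g + 1) : ℂ)) * ∏ j ∈ Finset.Icc 1 g, ((z - (a j : ℂ)) * (z - (b j : ℂ))) =
    (z - (a 1 : ℂ)) * ∏ j ∈ Finset.Icc 1 g, ((z - (b j : ℂ)) * (z - (a (j + 1) : ℂ))) := by
  induction g with
  | zero => simp
  | succ n ih =>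
    rw [Finset.prod_Icc_succ_top (by omega), Finset.prod_Icc_succ_top (by omega),
      ← mul_assoc (z - (a 1 : ℂ)), ← ih]
    ring

lemma aux_geom (ζ z : ℂ) (hz : z ≠ 0) (hne : ζ - z ≠ 0) (g : ℕ) :
    (ζ - z)⁻¹ = ζ ^ g / (z ^ g * (ζ - z)) -
      ∑ k ∈ Finset.range g, ζ ^ k * (z ^ (k + 1))⁻¹ := by
  induction g with
  | zero => simp
  | succ n ih =>
    rw [Finset.sum_range_succ, ih]
    field_simp
    ring

/-- In the band/gap setting with `α₁ = 0`, fix `x, t ∈ ℝ` and let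
`(Ω₁, …, Ω_g)` solve the moment system
`∑_j Ω_j ∫_{β_j}^{α_{j+1}} ζ^{k-1}/R dζ = ∑_j ∫_{β_j}^{α_{j+1}} 2θ⁺(ζ) ζ^{k-1}/R dζ`.
Then `G(λ) = (R(λ)/(2πi)) ∑_j ∫_{β_j}^{α_{j+1}} (Ω_j - 2θ⁺(ζ))/(R(ζ)(ζ-λ)) dζ` satisfies
`G(λ) = O(|λ|^{-1/2})` as `λ → ∞` in `ℂ ∖ [0, ∞)`; in particular `G(λ) → 0`. -/
theorem stmt_11
    (g : ℕ) (hg : 1 ≤ g) (a b : ℕ → ℝ)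
    (ha1 : a 1 = 0)
    (hord : ∀ j ∈ Finset.Icc 1 g, a j < b j ∧ b j < a (j + 1))
    (P : ℂ → ℂ)
    (hP : ∀ z : ℂ, P z = (z - (a (g + 1) : ℂ)) *
      ∏ j ∈ Finset.Icc 1 g, ((z - (a j : ℂ)) * (z - (b j : ℂ))))
    (σB : Set ℝ)
    (hσB : σB = Set.Ici (a (g + 1)) ∪ ⋃ j ∈ Finset.Icc 1 g, Set.Icc (a j) (b j))
    (Ω : Set ℂ) (hΩ : Ω = {z : ℂ | ¬(z.im = 0 ∧ z.re ∈ σB)})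
    (R : ℂ → ℂ)
    (hRanal : DifferentiableOn ℂ R Ω)
    (hRsq : ∀ z ∈ Ω, R z ^ 2 = P z)
    (hRasym : Tendsto (fun x : ℝ => R (x : ℂ) / (((|x| ^ ((g : ℝ) + 1/2) : ℝ)) : ℂ))
      atBot (nhds ((-1 : ℂ) ^ g * Complex.I)))
    (hRgap : ∀ j ∈ Finset.Icc 1 g, ∀ x ∈ Set.Ioo (b j) (a (j + 1)),
      (R (x : ℂ)).re = 0 ∧ R (x : ℂ) ≠ 0)
    (x t : ℝ)
    (θp : ℝ → ℝ) (hθp : ∀ ζ : ℝ, θp ζ = Real.sqrt ζ * (x + 4 * ζ * t))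
    (Ωv : ℕ → ℝ)
    (hΩv : ∀ k ∈ Finset.Icc 1 g,
      ∑ j ∈ Finset.Icc 1 g, (Ωv j : ℂ) *
          ∫ ζ in (b j)..(a (j + 1)), (ζ : ℂ) ^ (k - 1) / R (ζ : ℂ)
        = ∑ j ∈ Finset.Icc 1 g,
          ∫ ζ in (b j)..(a (j + 1)), 2 * (θp ζ : ℂ) * (ζ : ℂ) ^ (k - 1) / R (ζ : ℂ))
    (G : ℂ → ℂ)
    (hG : ∀ z : ℂ, G z = (R z / (2 * Real.pi * Complex.I)) *
      ∑ j ∈ Finset.Icc 1 g,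
        ∫ ζ in (b j)..(a (j + 1)),
          ((Ωv j : ℂ) - 2 * (θp ζ : ℂ)) / (R (ζ : ℂ) * ((ζ : ℂ) - z))) :
    (∃ C > (0:ℝ), ∃ M : ℝ, ∀ z : ℂ, ¬(z.im = 0 ∧ 0 ≤ z.re) → M ≤ ‖z‖ →
      ‖G z‖ ≤ C * ‖z‖ ^ (-(1/2 : ℝ))) ∧
    Tendsto G (Filter.comap (fun z : ℂ => ‖z‖) atTop ⊓
      Filter.principal {z : ℂ | ¬(z.im = 0 ∧ 0 ≤ z.re)}) (nhds 0) := by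
  have mono := aux_mono g a b hord
  have hσpos : ∀ y ∈ σB, 0 ≤ y := by
    intro y hy
    rw [hσB] at hy
    rcases hy with hy | hy
    · have := mono 1 (g + 1) le_rfl (by omega) le_rfl
      have hy' : a (g + 1) ≤ y := hy
      linarith
    · simp only [Set.mem_iUnion] at hy
      obtain ⟨j, hj, hy⟩ := hy
      have hj' := Finset.mem_Icc.1 hj
      have := mono 1 j le_rfl hj'.1 (by omega)
      have := hy.1
      linarith
  have hgapΩ : ∀ j ∈ Finset.Icc 1 g, ∀ y ∈ Set.Ioo (b j) (a (j + 1)), (y : ℂ) ∈ Ω := by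
    intro j hj y hy
    rw [hΩ]
    rintro ⟨-, hmem⟩
    have hj' := Finset.mem_Icc.1 hj
    rw [Complex.ofReal_re, hσB] at hmem
    rcases hmem with h | h
    · have h' : a (g + 1) ≤ y := h
      have := mono (j + 1) (g + 1) (by omega) (by omega) le_rfl
      linarith [hy.2]
    · simp only [Set.mem_iUnion] at h
      obtain ⟨i, hi, h⟩ := h
      have hi' := Finset.mem_Icc.1 hi
      rcases lt_trichotomy i j with hlt | rfl | hlt
      · have := mono (i + 1) j (by omega) (by omega) (by omega)
        linarith [hord i hi, (hord i hi).2, (hord j hj).1, h.2, hy.1]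
      · linarith [h.2, hy.1]
      · have := mono (j + 1) i (by omega) (by omega) (by omega)
        linarith [h.1, hy.2]
  have hint : ∀ j ∈ Finset.Icc 1 g, IntervalIntegrable (fun y : ℝ => (R (y : ℂ))⁻¹)
      MeasureTheory.volume (b j) (a (j + 1)) := by
    intro j hj
    have hj' := Finset.mem_Icc.1 hj
    refine aux_integrable (b j) (a (j + 1)) (hord j hj).2 (fun y => R (y : ℂ))
      (fun y => ((y : ℂ) - (a 1 : ℂ)) *
        ∏ i ∈ (Finset.Icc 1 g).erase j, (((y : ℂ) - (b i : ℂ)) * ((y : ℂ) - (a (i + 1) : ℂ))))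
      ?_ ?_ ?_ ?_
    · exact hRanal.continuousOn.comp Complex.continuous_ofReal.continuousOn (hgapΩ j hj)
    · fun_prop
    · intro y hy
      have nz : ∀ r : ℝ, y ≠ r → (y : ℂ) - (r : ℂ) ≠ 0 := by
        intro r hr
        rw [sub_ne_zero]
        exact_mod_cast hr
      refine mul_ne_zero (nz _ ?_) (Finset.prod_ne_zero_iff.2 ?_)
      · have := mono 1 j le_rfl hj'.1 (by omega)
        have := (hord j hj).1
        have := hy.1
        exact ne_of_gt (by linarith)
      · intro i hi
        obtain ⟨hij, hi⟩ := Finset.mem_erase.1 hi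
        have hi' := Finset.mem_Icc.1 hi
        have h1 := hord i hi
        have h2 := hord j hj
        have h3 := hy.1
        have h4 := hy.2
        rcases lt_or_gt_of_ne hij with hlt | hlt
        · have := mono (i + 1) j (by omega) (by omega) (by omega)
          exact mul_ne_zero (nz _ (ne_of_gt (by linarith))) (nz _ (ne_of_gt (by linarith)))
        · have := mono (j + 1) i (by omega) (by omega) (by omega)
          exact mul_ne_zero (nz _ (ne_of_lt (by linarith))) (nz _ (ne_of_lt (by linarith)))
    · intro y hy
      show R (y : ℂ) ^ 2 = _
      rw [hRsq _ (hgapΩ j hj y hy), hP, aux_prod, ← Finset.mul_prod_erase _ _ hj]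
      ring
  have hθc : Continuous θp := by
    have : θp = fun ζ : ℝ => Real.sqrt ζ * (x + 4 * ζ * t) := funext hθp
    rw [this]; fun_prop
  -- the density on each gap
  set h : ℕ → ℝ → ℂ := fun j ζ => ((Ωv j : ℂ) - 2 * (θp ζ : ℂ)) * (R (ζ : ℂ))⁻¹ with hh
  have hhint : ∀ j ∈ Finset.Icc 1 g, IntervalIntegrable (h j)
      MeasureTheory.volume (b j) (a (j + 1)) := by
    intro j hj
    exact (hint j hj).continuousOn_mul (by fun_prop)
  have hhk : ∀ j ∈ Finset.Icc 1 g, ∀ k : ℕ, IntervalIntegrable (fun ζ : ℝ => (ζ : ℂ) ^ k * h j ζ)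
      MeasureTheory.volume (b j) (a (j + 1)) := by
    intro j hj k
    exact (hhint j hj).continuousOn_mul (by fun_prop)
  have hmom : ∀ k ∈ Finset.range g,
      ∑ j ∈ Finset.Icc 1 g, ∫ ζ in (b j)..(a (j + 1)), (ζ : ℂ) ^ k * h j ζ = 0 := by
    intro k hk
    have h0 := hΩv (k + 1) (Finset.mem_Icc.2 ⟨by omega, by have := Finset.mem_range.1 hk; omega⟩)
    rw [← sub_eq_zero, ← Finset.sum_sub_distrib] at h0
    rw [← h0]
    refine Finset.sum_congr rfl fun j hj => ?_
    rw [← intervalIntegral.integral_const_mul, ← intervalIntegral.integral_sub]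
    · refine intervalIntegral.integral_congr fun ζ _ => ?_
      simp only [hh, Nat.add_sub_cancel]
      ring
    · refine IntervalIntegrable.const_mul ?_ _
      simp only [div_eq_mul_inv]
      exact (hint j hj).continuousOn_mul (by fun_prop)
    · simp only [div_eq_mul_inv]
      exact (hint j hj).continuousOn_mul (by fun_prop)
  set A := a (g + 1) with hA
  have hA0 : 0 < A := by
    have h1 := hord 1 (Finset.mem_Icc.2 ⟨le_rfl, hg⟩)
    have := mono 2 (g + 1) (by omega) (by omega) le_rfl
    have h2 : b 1 < a 2 := h1.2
    linarith [h1.1]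
  have haA : ∀ i, 1 ≤ i → i ≤ g + 1 → |a i| ≤ A := by
    intro i h1 h2
    rw [abs_of_nonneg]
    · exact mono i (g + 1) h1 h2 le_rfl
    · rw [← ha1]; exact mono 1 i le_rfl h1 h2
  have hbA : ∀ i ∈ Finset.Icc 1 g, |b i| ≤ A := by
    intro i hi
    have hi' := Finset.mem_Icc.1 hi
    have h1 := hord i hi
    have h2 := mono 1 i le_rfl hi'.1 (by omega)
    have h3 := mono (i + 1) (g + 1) (by omega) (by omega) le_rfl
    rw [abs_of_nonneg (by linarith)]
    linarith
  -- bound for R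
  have hRb : ∀ z : ℂ, ¬(z.im = 0 ∧ 0 ≤ z.re) → A ≤ ‖z‖ → ‖R z‖ ^ 2 ≤ (2 * ‖z‖) ^ (2 * g + 1) := by
    intro z hz hAz
    have hzΩ : z ∈ Ω := by
      rw [hΩ]; rintro ⟨h1, h2⟩; exact hz ⟨h1, hσpos _ h2⟩
    have fac : ∀ r : ℝ, |r| ≤ A → ‖z - (r : ℂ)‖ ≤ 2 * ‖z‖ := by
      intro r hr
      have := norm_sub_le z (r : ℂ)
      rw [Complex.norm_real, Real.norm_eq_abs] at this
      linarith
    rw [← norm_pow, hRsq z hzΩ, hP, norm_mul, norm_prod]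
    have hp : ∏ j ∈ Finset.Icc 1 g, ‖(z - (a j : ℂ)) * (z - (b j : ℂ))‖ ≤
        ∏ j ∈ Finset.Icc 1 g, (2 * ‖z‖) ^ 2 := by
      refine Finset.prod_le_prod (fun _ _ => norm_nonneg _) fun j hj => ?_
      have hj' := Finset.mem_Icc.1 hj
      rw [norm_mul, sq]
      exact mul_le_mul (fac _ (haA j hj'.1 (by omega))) (fac _ (hbA j hj)) (norm_nonneg _)
        (by positivity)
    rw [Finset.prod_const, Nat.card_Icc, Nat.add_sub_cancel, ← pow_mul] at hp
    calc _ ≤ (2 * ‖z‖) * (2 * ‖z‖) ^ (2 * g) :=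
          mul_le_mul (fac _ (haA (g + 1) (by omega) le_rfl)) hp
            (Finset.prod_nonneg fun _ _ => norm_nonneg _) (by positivity)
      _ = _ := by ring
  -- bound for the sum of Cauchy integrals
  set N : ℝ := ∑ j ∈ Finset.Icc 1 g, ∫ ζ in (b j)..(a (j + 1)), ‖h j ζ‖ with hN
  have hN0 : 0 ≤ N := Finset.sum_nonneg fun j hj =>
    intervalIntegral.integral_nonneg (hord j hj).2.le fun _ _ => norm_nonneg _
  have hSb : ∀ z : ℂ, 2 * A ≤ ‖z‖ →
      ‖∑ j ∈ Finset.Icc 1 g, ∫ ζ in (b j)..(a (j + 1)),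
          ((Ωv j : ℂ) - 2 * (θp ζ : ℂ)) / (R (ζ : ℂ) * ((ζ : ℂ) - z))‖ ≤
        2 * A ^ g / ‖z‖ ^ (g + 1) * N := by
    intro z hz
    have hz0 : 0 < ‖z‖ := by linarith
    have hzne : z ≠ 0 := norm_pos_iff.1 hz0
    have hζA : ∀ j ∈ Finset.Icc 1 g, ∀ ζ ∈ Set.Icc (b j) (a (j + 1)), ‖(ζ : ℂ)‖ ≤ A := by
      intro j hj ζ hζ
      have hj' := Finset.mem_Icc.1 hj
      rw [Complex.norm_real, Real.norm_eq_abs, abs_le]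
      have h1 := abs_le.1 (hbA j hj)
      have h2 := abs_le.1 (haA (j + 1) (by omega) (by omega))
      exact ⟨by linarith [hζ.1], by linarith [hζ.2]⟩
    have hζz : ∀ j ∈ Finset.Icc 1 g, ∀ ζ ∈ Set.Icc (b j) (a (j + 1)),
        ‖z‖ / 2 ≤ ‖(ζ : ℂ) - z‖ := by
      intro j hj ζ hζ
      have h1 := hζA j hj ζ hζ
      have h2 := norm_sub_norm_le z (ζ : ℂ)
      rw [norm_sub_rev] at h2
      linarith
    have hζne : ∀ j ∈ Finset.Icc 1 g, ∀ ζ ∈ Set.Icc (b j) (a (j + 1)), (ζ : ℂ) - z ≠ 0 := by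
      intro j hj ζ hζ
      rw [← norm_pos_iff]
      linarith [hζz j hj ζ hζ]
    have hremint : ∀ j ∈ Finset.Icc 1 g, IntervalIntegrable
        (fun ζ : ℝ => (ζ : ℂ) ^ g / (z ^ g * ((ζ : ℂ) - z)) * h j ζ)
        MeasureTheory.volume (b j) (a (j + 1)) := by
      intro j hj
      refine (hhint j hj).continuousOn_mul ?_
      rw [Set.uIcc_of_le (hord j hj).2.le]
      refine ContinuousOn.div (by fun_prop) (by fun_prop) fun ζ hζ => ?_
      exact mul_ne_zero (pow_ne_zero _ hzne) (hζne j hj ζ hζ)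
    have hexp : ∀ j ∈ Finset.Icc 1 g, ∫ ζ in (b j)..(a (j + 1)),
          ((Ωv j : ℂ) - 2 * (θp ζ : ℂ)) / (R (ζ : ℂ) * ((ζ : ℂ) - z)) =
        (∫ ζ in (b j)..(a (j + 1)), (ζ : ℂ) ^ g / (z ^ g * ((ζ : ℂ) - z)) * h j ζ) -
        ∑ k ∈ Finset.range g, (z ^ (k + 1))⁻¹ *
          ∫ ζ in (b j)..(a (j + 1)), (ζ : ℂ) ^ k * h j ζ := by
      intro j hj
      simp_rw [← intervalIntegral.integral_const_mul]
      rw [← intervalIntegral.integral_finsetSum, ← intervalIntegral.integral_sub (hremint j hj)]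
      · refine intervalIntegral.integral_congr fun ζ hζ => ?_
        rw [Set.uIcc_of_le (hord j hj).2.le] at hζ
        have e := aux_geom (ζ : ℂ) z hzne (hζne j hj ζ hζ) g
        show ((Ωv j : ℂ) - 2 * (θp ζ : ℂ)) / (R (ζ : ℂ) * ((ζ : ℂ) - z)) = _
        have e2 : ((Ωv j : ℂ) - 2 * (θp ζ : ℂ)) / (R (ζ : ℂ) * ((ζ : ℂ) - z)) =
            ((ζ : ℂ) - z)⁻¹ * h j ζ := by
          simp only [hh, div_eq_mul_inv, mul_inv]; ring
        rw [e2, e, sub_mul, Finset.sum_mul]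
        congr 1
        exact Finset.sum_congr rfl fun k _ => by ring
      · have hs := IntervalIntegrable.sum (μ := MeasureTheory.volume) (a := b j) (b := a (j + 1))
          (Finset.range g) (f := fun k (ζ : ℝ) => (z ^ (k + 1))⁻¹ * ((ζ : ℂ) ^ k * h j ζ))
          (fun k _ => (hhk j hj k).const_mul _)
        rw [Finset.sum_fn] at hs
        exact hs
      · exact fun k _ => (hhk j hj k).const_mul _
    rw [Finset.sum_congr rfl hexp, Finset.sum_sub_distrib, Finset.sum_comm]
    simp_rw [← Finset.mul_sum]
    rw [Finset.sum_eq_zero (s := Finset.range g) (fun k hk => by rw [hmom k hk, mul_zero]), sub_zero]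
    refine (norm_sum_le _ _).trans ?_
    rw [hN, Finset.mul_sum]
    refine Finset.sum_le_sum fun j hj => ?_
    rw [← intervalIntegral.integral_const_mul]
    refine intervalIntegral.norm_integral_le_of_norm_le (hord j hj).2.le
      (Filter.Eventually.of_forall fun ζ hζ => ?_) ((hhint j hj).norm.const_mul _)
    have hζ' : ζ ∈ Set.Icc (b j) (a (j + 1)) := ⟨hζ.1.le, hζ.2⟩
    rw [norm_mul]
    refine mul_le_mul_of_nonneg_right ?_ (norm_nonneg _)
    rw [norm_div, norm_mul, norm_pow, norm_pow]
    have h1 := hζz j hj ζ hζ'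
    have h2 := hζA j hj ζ hζ'
    calc ‖(ζ : ℂ)‖ ^ g / (‖z‖ ^ g * ‖(ζ : ℂ) - z‖) ≤ A ^ g / (‖z‖ ^ g * (‖z‖ / 2)) := by
          gcongr
      _ = 2 * A ^ g / ‖z‖ ^ (g + 1) := by
          field_simp
          ring
  have main : ∃ C > (0:ℝ), ∃ M : ℝ, ∀ z : ℂ, ¬(z.im = 0 ∧ 0 ≤ z.re) → M ≤ ‖z‖ →
      ‖G z‖ ≤ C * ‖z‖ ^ (-(1/2 : ℝ)) := by
    refine ⟨Real.sqrt (2 ^ (2 * g + 1)) * (2 * A ^ g * N) + 1, by positivity, 2 * A, ?_⟩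
    intro z hz hM
    have hz0 : 0 < ‖z‖ := by linarith
    have hR1 : ‖R z‖ ≤ Real.sqrt (2 ^ (2 * g + 1)) * (‖z‖ ^ g * Real.sqrt ‖z‖) := by
      have h1 := Real.le_sqrt_of_sq_le (hRb z hz (by linarith))
      refine h1.trans (le_of_eq ?_)
      rw [mul_pow, Real.sqrt_mul (by positivity)]
      congr 1
      rw [pow_succ, Real.sqrt_mul (by positivity), mul_comm 2 g, pow_mul,
        Real.sqrt_sq (by positivity)]
    have hS := hSb z hM
    rw [hG, norm_mul, norm_div]
    have hpi : (1 : ℝ) ≤ ‖(2 * Real.pi * Complex.I : ℂ)‖ := by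
      rw [norm_mul, norm_mul, Complex.norm_I, Complex.norm_real,
        Real.norm_of_nonneg Real.pi_pos.le]
      have := Real.pi_gt_three
      norm_num
      linarith
    have hR2 := (div_le_self (norm_nonneg (R z)) hpi).trans hR1
    refine (mul_le_mul hR2 hS (norm_nonneg _) (by positivity)).trans ?_
    rw [Real.rpow_neg hz0.le, ← Real.sqrt_eq_rpow]
    have hs0 : 0 < Real.sqrt ‖z‖ := Real.sqrt_pos.2 hz0
    have e : Real.sqrt (2 ^ (2 * g + 1)) * (‖z‖ ^ g * Real.sqrt ‖z‖) *
        (2 * A ^ g / ‖z‖ ^ (g + 1) * N) =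
        Real.sqrt (2 ^ (2 * g + 1)) * (2 * A ^ g * N) * (Real.sqrt ‖z‖)⁻¹ := by
      have : ‖z‖ ^ (g + 1) = ‖z‖ ^ g * (Real.sqrt ‖z‖ * Real.sqrt ‖z‖) := by
        rw [Real.mul_self_sqrt hz0.le, pow_succ]
      rw [this]
      field_simp
    rw [e]
    refine mul_le_mul_of_nonneg_right (by linarith) (by positivity)
  refine ⟨main, ?_⟩
  obtain ⟨C, hC, M, hb⟩ := main
  have hlim : Tendsto (fun z : ℂ => C * ‖z‖ ^ (-(1/2 : ℝ)))
      (Filter.comap (fun z : ℂ => ‖z‖) atTop ⊓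
      Filter.principal {z : ℂ | ¬(z.im = 0 ∧ 0 ≤ z.re)}) (nhds 0) := by
    have h1 := (tendsto_rpow_neg_atTop (y := 1/2) (by norm_num)).const_mul C
    rw [mul_zero] at h1
    exact h1.comp (tendsto_comap.mono_left inf_le_left)
  refine squeeze_zero_norm' ?_ hlim
  have hM : ∀ᶠ z in Filter.comap (fun z : ℂ => ‖z‖) atTop, M ≤ ‖z‖ :=
    tendsto_comap.eventually (eventually_ge_atTop M)
  rw [Filter.eventually_inf_principal]
  filter_upwards [hM] with z h1 h2
  exact hb z h2 h1
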